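/- Fix E and δ with 0 < δ < L(E), where L(E) is the Lyapunov exponent (assumed to exist). Then for all sufficiently large k (depending on E and δ), for every x in the circle and every n ∈ ℤ: if n is (x, L(E) − δ, q_k)-singular, then |P_{q_k}(T^a x, E)| ≤ e^{q_k(L(E) − δ/10)} for every integer a in the interval [n − ⌊3q_k/4⌋, n − ⌊q_k/4⌋]. Furthermore the number N_k = ⌊3q_k/4⌋ − ⌊q_k/4⌋ + 1 of such integers a satisfies (q_k + 1)/2 ≤ N_k ≤ (q_k + 3)/2. -/

import Mathlib

/-!
Suppose `|P_q(T^a x, E)| > exp (q (L - δ/10))` for some `a` with `q/4 ≲ n - a ≲ 3q/4`. By Cramer's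
rule (`jac_inv_left`, `jac_inv_right`) the two Green function entries of the box `[a, a + q - 1]`
are, up to sign, the determinants of the blocks to the right and to the left of `n` divided by
`P_q(T^a x, E)`. The determinants are entries of transfer matrices, so they are at most
`exp (m (L + δ/20))` for a block of length `m`, provided the growth of the transfer matrices is
bounded by the Lyapunov exponent uniformly in the phase. The resulting quotients are small enough
to make `n` regular.

The uniform bound is `uniform_upper`. The distribution function of `ν` conjugates `T` to the
translation by `α` (`exists_conj`), and, since `ν` is comparable to Lebesgue measure, orbits that
start close stay close. As `α` is irrational, after a bounded time shift any orbit follows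
any other one modulo `1`. Hence the Birkhoff sums of a bounded periodic `g` along one orbit are
bounded, up to a constant, by those of the envelope `upEnv g r = sup_{B(·, r)} g` along any
other orbit (`birkhoff_compare`). Integrating over the second orbit bounds them by
`n ∫ upEnv g r dν + C` (`birkhoff_upper`). For `g = log ‖M_N‖`, which is continuous off a countable
set, dominated convergence gives `∫ upEnv g r dν → ∫ g dν` as `r → 0`. Cutting `M_n` into blocks of
length `N` and applying this to `T ^ N` finishes the bound.
-/

open MeasureTheory Polynomial Filter

noncomputable section

attribute [local instance] Matrix.normedAddCommGroup

/-- Dirichlet restriction `H_n(x)` of the Schrödinger operator with potential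
`n ↦ λ f (T^n x)` to `[0, n-1]`: tridiagonal with diagonal `λ f (T^j x)` and `1`
on the two off-diagonals. -/
def HDir (lam : ℝ) (f : ℝ → ℝ) (T : Equiv.Perm ℝ) (x : ℝ) (n : ℕ) :
    Matrix (Fin n) (Fin n) ℝ :=
  Matrix.of fun i j : Fin n =>
    (if i = j then lam * f ((T ^ (i : ℕ)) x) else 0) +
    (if (i : ℕ) + 1 = (j : ℕ) ∨ (j : ℕ) + 1 = (i : ℕ) then 1 else 0)

/-- Periodic restriction `H̃_n(x)`: the Dirichlet restriction with additional
entries `1` in the corners `(0, n-1)` and `(n-1, 0)`. -/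
def HPer (lam : ℝ) (f : ℝ → ℝ) (T : Equiv.Perm ℝ) (x : ℝ) (n : ℕ) :
    Matrix (Fin n) (Fin n) ℝ :=
  HDir lam f T x n +
    Matrix.of (fun i j : Fin n =>
      if ((i : ℕ) = 0 ∧ (j : ℕ) = n - 1) ∨ ((i : ℕ) = n - 1 ∧ (j : ℕ) = 0) then (1 : ℝ) else 0)

/-- `P_n(x,E) = det (H_n(x) - E)`. -/
def Pdet (lam : ℝ) (f : ℝ → ℝ) (T : Equiv.Perm ℝ) (x E : ℝ) (n : ℕ) : ℝ :=
  (HDir lam f T x n - E • (1 : Matrix (Fin n) (Fin n) ℝ)).det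

/-- `P_n(x,E)` with integer index, with the conventions `P_0 = 1` and `P_n = 0` for `n < 0`. -/
def PdetI (lam : ℝ) (f : ℝ → ℝ) (T : Equiv.Perm ℝ) (x E : ℝ) (n : ℤ) : ℝ :=
  if 0 ≤ n then Pdet lam f T x E n.toNat else 0

/-- `P̃_n(x,E) = det (H̃_n(x) - E)`. -/
def PtildeDet (lam : ℝ) (f : ℝ → ℝ) (T : Equiv.Perm ℝ) (x E : ℝ) (n : ℕ) : ℝ :=
  (HPer lam f T x n - E • (1 : Matrix (Fin n) (Fin n) ℝ)).det

/-- One-step transfer matrix `A_i(x,E)`. -/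
def transferA (lam : ℝ) (f : ℝ → ℝ) (T : Equiv.Perm ℝ) (E x : ℝ) (i : ℕ) :
    Matrix (Fin 2) (Fin 2) ℝ :=
  !![E - lam * f ((T ^ i) x), -1; 1, 0]

/-- `n`-step transfer matrix `M_n(x,E) = A_{n-1} ⋯ A_0`. -/
def transferM (lam : ℝ) (f : ℝ → ℝ) (T : Equiv.Perm ℝ) (E x : ℝ) :
    ℕ → Matrix (Fin 2) (Fin 2) ℝ
  | 0 => 1
  | m + 1 => transferA lam f T E x m * transferM lam f T E x m

/-- Dirichlet restriction `H_{[a, a+m-1]}(x)` of the operator to the integer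
interval starting at `a : ℤ` of length `m`. -/
def HBox (lam : ℝ) (f : ℝ → ℝ) (T : Equiv.Perm ℝ) (x : ℝ) (a : ℤ) (m : ℕ) :
    Matrix (Fin m) (Fin m) ℝ :=
  Matrix.of fun i j : Fin m =>
    (if i = j then lam * f ((T ^ (a + ((i : ℕ) : ℤ))) x) else 0) +
    (if (i : ℕ) + 1 = (j : ℕ) ∨ (j : ℕ) + 1 = (i : ℕ) then 1 else 0)

/-- Green function `G_{x,E,[a,a+m-1]} = (H_{[a,a+m-1]}(x) - E)⁻¹`. -/
def GBox (lam : ℝ) (f : ℝ → ℝ) (T : Equiv.Perm ℝ) (x E : ℝ) (a : ℤ) (m : ℕ) :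
    Matrix (Fin m) (Fin m) ℝ :=
  (HBox lam f T x a m - E • (1 : Matrix (Fin m) (Fin m) ℝ))⁻¹

/-- A point `n : ℤ` is `(x, c, qk)`-regular: there is an interval `[a, b]` of length
`qk` (`b = a + qk - 1`) containing `n` with `|n - a| ≥ qk/5`, `|n - b| ≥ qk/5` and
`|G(a,n)| ≤ e^{-c|n-a|}`, `|G(n,b)| ≤ e^{-c|n-b|}`. -/
def RegularPt (lam : ℝ) (f : ℝ → ℝ) (T : Equiv.Perm ℝ) (x E c : ℝ) (qk : ℕ) (n : ℤ) : Prop :=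
  ∃ (a : ℤ) (i0 i j : Fin qk),
    (i0 : ℕ) = 0 ∧ (j : ℕ) = qk - 1 ∧ n = a + ((i : ℕ) : ℤ) ∧
    (qk : ℝ) / 5 ≤ ((i : ℕ) : ℝ) ∧ (qk : ℝ) / 5 ≤ ((j : ℕ) : ℝ) - ((i : ℕ) : ℝ) ∧
    |GBox lam f T x E a qk i0 i| ≤ Real.exp (-c * ((i : ℕ) : ℝ)) ∧
    |GBox lam f T x E a qk i j| ≤ Real.exp (-c * (((j : ℕ) : ℝ) - ((i : ℕ) : ℝ)))

/-- The `ν`-measure of the positively oriented arc of the circle `ℝ/ℤ` from `u` to `v`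
(computed for a `1`-periodic measure `ν` on `ℝ`). -/
def arcMeasure (ν : Measure ℝ) (u v : ℝ) : ℝ :=
  (ν (Set.Icc u (u + Int.fract (v - u)))).toReal

/-- The `ν`-measure of the smaller of the two complementary arcs between `u` and `v`. -/
def arcDist (ν : Measure ℝ) (u v : ℝ) : ℝ :=
  min (arcMeasure ν u v) (arcMeasure ν v u)

/-- The measure of the gap of the orbit point `T^j x` in the partition of the circle
by `x, Tx, …, T^{qk-1}x`: the measure of the positively oriented arc from `T^j x` to the
closest (in the positive direction) other orbit point. -/
def gapMeas (ν : Measure ℝ) (T : Equiv.Perm ℝ) (x : ℝ) (qk : ℕ) (j : ℕ) : ℝ :=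
  sInf ((fun j' : ℕ => arcMeasure ν ((T ^ j) x) ((T ^ j') x)) '' {j' | j' < qk ∧ j' ≠ j})

/-- `β(α) = limsup_k (ln q_{k+1}) / q_k` computed from the sequence of
continued-fraction denominators. -/
def cfBeta (q : ℕ → ℕ) : ℝ :=
  Filter.limsup (fun k : ℕ => Real.log (q (k + 1) : ℝ) / (q k : ℝ)) Filter.atTop

/-! ### Jacobi determinants and Green functions -/

/-- Product `B_{n-1} ⋯ B_0` of the one-step matrices `B_i = [[u_i, -1], [1, 0]]` attached to a
sequence `u`; for `u_i = E - λ f (T^i x)` this is the transfer matrix. -/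
def seqM (u : ℕ → ℝ) : ℕ → Matrix (Fin 2) (Fin 2) ℝ
  | 0 => 1
  | m + 1 => !![u m, -1; 1, 0] * seqM u m

/-- Determinant of the `n × n` Jacobi matrix with diagonal `u_0, …, u_{n-1}` and off-diagonal `-1`,
encoded as the upper left entry of `seqM u n`. -/
def cont (u : ℕ → ℝ) (n : ℕ) : ℝ := seqM u n 0 0

/-- Jacobi matrix with diagonal `u` and off-diagonal entries `-1`. -/
def jac (u : ℕ → ℝ) (n : ℕ) : Matrix (Fin n) (Fin n) ℝ :=
  Matrix.of fun i j : Fin n =>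
    (if i = j then u i else 0) -
    (if (i : ℕ) + 1 = (j : ℕ) ∨ (j : ℕ) + 1 = (i : ℕ) then 1 else 0)

lemma seqM_succ' (u : ℕ → ℝ) (n : ℕ) :
    seqM u (n + 1) = seqM (fun i => u (i + 1)) n * !![u 0, -1; 1, 0] := by
  induction n with
  | zero => simp [seqM]
  | succ n ih =>
    rw [seqM, ih, seqM, Matrix.mul_assoc]

@[simp] lemma cont_zero (u : ℕ → ℝ) : cont u 0 = 1 := by simp [cont, seqM]

@[simp] lemma cont_one (u : ℕ → ℝ) : cont u 1 = u 0 := by simp [cont, seqM]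

/-- Expansion of the Jacobi determinant at the last site. -/
lemma cont_last (u : ℕ → ℝ) (n : ℕ) :
    cont u (n + 2) = u (n + 1) * cont u (n + 1) - cont u n := by
  have h1 : ∀ m, seqM u (m + 1) 0 0 = u m * seqM u m 0 0 - seqM u m 1 0 := by
    intro m
    simp only [seqM, Matrix.mul_apply, Fin.sum_univ_two]
    simp
    ring
  have h2 : ∀ m, seqM u (m + 1) 1 0 = seqM u m 0 0 := by
    intro m
    simp only [seqM, Matrix.mul_apply, Fin.sum_univ_two]
    simp
  simp only [cont]
  rw [h1 (n + 1), h2]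

/-- Expansion of the Jacobi determinant at the first site. -/
lemma cont_first (u : ℕ → ℝ) (n : ℕ) :
    cont u (n + 2) = u 0 * cont (fun i => u (i + 1)) (n + 1) - cont (fun i => u (i + 2)) n := by
  simp [cont, seqM_succ', Matrix.mul_apply, Fin.sum_univ_two]
  ring

lemma det_jac_rec (u : ℕ → ℝ) (n : ℕ) :
    (jac u (n + 2)).det = u 0 * (jac (fun i => u (i + 1)) (n + 1)).det
      - (jac (fun i => u (i + 2)) n).det := by
  rw [Matrix.det_succ_row_zero, Fin.sum_univ_succ, Fin.sum_univ_succ]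
  have hz : ∀ i : Fin n, jac u (n + 2) 0 i.succ.succ = 0 := by
    intro i
    simp [jac, Fin.ext_iff]
  have h1 : (jac u (n + 2)).submatrix Fin.succ (Fin.succAbove 0)
      = jac (fun i => u (i + 1)) (n + 1) := by
    ext i j
    simp [jac]
  have h2 : ((jac u (n + 2)).submatrix Fin.succ (Fin.succAbove (Fin.succ 0))).det
      = - (jac (fun i => u (i + 2)) n).det := by
    rw [Matrix.det_succ_column_zero, Fin.sum_univ_succ]
    have hz' : ∀ i : Fin n, (jac u (n + 2)).submatrix Fin.succ
        (Fin.succAbove (Fin.succ (0 : Fin (n + 1)))) i.succ 0 = 0 := by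
      intro i
      simp [jac, Fin.ext_iff]
    have h3 : ((jac u (n + 2)).submatrix Fin.succ
        (Fin.succAbove (Fin.succ (0 : Fin (n + 1))))).submatrix (Fin.succAbove 0) Fin.succ
        = jac (fun i => u (i + 2)) n := by
      ext i j
      have : (Fin.succAbove (1 : Fin (n + 2)) j.succ) = j.succ.succ := by
        simp [Fin.succAbove, Fin.lt_def]
      simp [jac, this]
    simp only [hz', h3]
    simp [jac]
  simp only [hz, h1, h2]
  simp [jac]
  ring

lemma det_jac : ∀ (n : ℕ) (u : ℕ → ℝ), (jac u n).det = cont u n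
  | 0, u => by simp
  | 1, u => by simp [jac]
  | n + 2, u => by
    rw [det_jac_rec, det_jac (n + 1), det_jac n, cont_first]

/-- Action of a Jacobi matrix on a vector: with zero values added at both ends, every row is the
same three-term expression. The index is shifted by one, so that `W 0` and `W (n + 1)` are the
added zeros. -/
lemma jac_mulVec (u : ℕ → ℝ) (n : ℕ) (W : ℕ → ℝ) (h0 : W 0 = 0) (hn : W (n + 1) = 0) (i : Fin n) :
    (jac u n).mulVec (fun j : Fin n => W (j + 1)) i
      = u i * W (i + 1) - W (i + 2) - W i := by
  have e1 : ∀ j : Fin n, jac u n i j * W (j + 1)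
      = (if i = j then u i * W (i + 1) else 0)
        - (if (i : ℕ) + 1 = (j : ℕ) then W (i + 2) else 0)
        - (if (j : ℕ) + 1 = (i : ℕ) then W i else 0) := by
    intro j
    simp only [jac, Matrix.of_apply]
    rcases lt_trichotomy (i : ℕ) j with h | h | h
    · have a1 : i ≠ j := fun e => by simp [e] at h
      have a2 : ¬ (j : ℕ) + 1 = i := by omega
      by_cases a3 : (i : ℕ) + 1 = j
      · have a4 : (j : ℕ) + 1 = i + 2 := by omega
        simp [a1, a3, a4]
      · simp [a1, a2, a3]
    · have a1 : i = j := Fin.ext h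
      simp [a1]
    · have a1 : i ≠ j := fun e => by simp [e] at h
      have a2 : ¬ (i : ℕ) + 1 = j := by omega
      by_cases a3 : (j : ℕ) + 1 = i
      · simp [a1, a2, a3]
      · simp [a1, a2, a3]
  simp only [Matrix.mulVec, dotProduct, e1, Finset.sum_sub_distrib]
  have s2 : ∑ j : Fin n, (if (i : ℕ) + 1 = (j : ℕ) then W (i + 2) else 0) = W (i + 2) := by
    by_cases h : (i : ℕ) + 1 < n
    · rw [Finset.sum_eq_single ⟨i + 1, h⟩]
      · simp
      · intro b _ hb
        rw [if_neg]
        exact fun e => hb (Fin.ext e.symm)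
      · simp
    · have : (i : ℕ) + 2 = n + 1 := by have := i.2; omega
      rw [this, hn]
      simp
  have s3 : ∑ j : Fin n, (if (j : ℕ) + 1 = (i : ℕ) then W i else 0) = W i := by
    by_cases h : 0 < (i : ℕ)
    · rw [Finset.sum_eq_single ⟨i - 1, by omega⟩]
      · rw [if_pos]; simp; omega
      · intro b _ hb
        rw [if_neg]
        intro e
        exact hb (Fin.ext (by simp; omega))
      · simp
    · have : (i : ℕ) = 0 := by omega
      simp [this, h0]
  rw [s2, s3]
  simp

lemma inv_apply_of_mulVec {n : ℕ} (A : Matrix (Fin n) (Fin n) ℝ) (hA : A.det ≠ 0)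
    (w : Fin n → ℝ) (c : Fin n) (d : ℝ) (hw : A.mulVec w = fun i => if i = c then d else 0)
    (i : Fin n) : w i = d * A⁻¹ i c := by
  have hu : IsUnit A.det := isUnit_iff_ne_zero.mpr hA
  have h1 : A⁻¹.mulVec (A.mulVec w) = w := by
    rw [Matrix.mulVec_mulVec, Matrix.nonsing_inv_mul A hu, Matrix.one_mulVec]
  rw [hw] at h1
  rw [← h1]
  simp [Matrix.mulVec, dotProduct, mul_comm]

lemma jac_transpose (u : ℕ → ℝ) (n : ℕ) : (jac u n).transpose = jac u n := by
  ext i j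
  simp only [jac, Matrix.transpose_apply, Matrix.of_apply]
  by_cases h : i = j
  · simp [h]
  · rw [if_neg h, if_neg (Ne.symm h)]
    simp only [or_comm]

/-- Cramer's rule for the Green function at the left end of the box. -/
lemma jac_inv_left (u : ℕ → ℝ) (n : ℕ) (hd : cont u (n + 1) ≠ 0) (i : Fin (n + 1)) :
    cont u (n + 1) * (jac u (n + 1))⁻¹ 0 i = cont (fun k => u (k + (i + 1))) (n - i) := by
  -- `W (j + 1)` is the determinant of the block on the sites `j + 1, …, n`.
  let W : ℕ → ℝ := fun j => if j = 0 then 0 else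
    if j ≤ n + 1 then cont (fun k => u (k + j)) (n + 1 - j) else 0
  let w : Fin (n + 1) → ℝ := fun j => cont (fun k => u (k + (j + 1))) (n - j)
  have hwW : ∀ m, n + 2 ≤ m → W m = 0 := by
    intro m hm
    simp only [W]
    rw [if_neg (by omega), if_neg (by omega)]
  have hwe : w = fun j : Fin (n + 1) => W (j + 1) := by
    ext j
    have := j.2
    simp only [w, W]
    rw [if_neg (by omega), if_pos (by omega)]
    congr 1
    omega
  have hW : (jac u (n + 1)).mulVec w = fun i => if i = 0 then cont u (n + 1) else 0 := by
    rw [hwe]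
    ext j
    rw [jac_mulVec u (n + 1) W (by simp [W]) (hwW _ (by omega))]
    have hj := j.2
    have key : ∀ m, m ≤ n → u m * W (m + 1) - W (m + 2) = cont (fun k => u (k + m)) (n + 1 - m) := by
      intro m hm
      rcases Nat.lt_or_ge m n with h | h
      · obtain ⟨t, rfl⟩ : ∃ t, n = m + 1 + t := ⟨n - (m + 1), by omega⟩
        simp only [W]
        rw [if_neg (by omega), if_pos (by omega), if_neg (by omega), if_pos (by omega)]
        rw [show m + 1 + t + 1 - m = t + 2 by omega, cont_first,
          show m + 1 + t + 1 - (m + 1) = t + 1 by omega,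
          show m + 1 + t + 1 - (m + 2) = t by omega]
        simp only [zero_add]
        congr 3 <;> · ext k; congr 1; omega
      · obtain rfl : m = n := by omega
        rw [hwW _ (le_refl _)]
        simp [W]
    rw [key j (by omega)]
    by_cases h0 : j = 0
    · simp [h0, W]
    · have h0' : (j : ℕ) ≠ 0 := fun e => h0 (Fin.ext e)
      simp [W, h0, h0', hj.le]
  have := inv_apply_of_mulVec _ (by rw [det_jac]; exact hd) w 0 _ hW i
  have hs : (jac u (n + 1))⁻¹ 0 i = (jac u (n + 1))⁻¹ i 0 := by
    conv_lhs => rw [← jac_transpose, ← Matrix.transpose_nonsing_inv, Matrix.transpose_apply]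
  rw [hs, ← this]

/-- Cramer's rule for the Green function at the right end of the box. -/
lemma jac_inv_right (u : ℕ → ℝ) (n : ℕ) (hd : cont u (n + 1) ≠ 0) (i : Fin (n + 1)) :
    cont u (n + 1) * (jac u (n + 1))⁻¹ i (Fin.last n) = cont u i := by
  let W : ℕ → ℝ := fun j => if j = 0 then 0 else if j ≤ n + 1 then cont u (j - 1) else 0
  let w : Fin (n + 1) → ℝ := fun j => cont u j
  have hwe : w = fun j : Fin (n + 1) => W (j + 1) := by
    ext j
    have := j.2
    simp only [w, W]
    rw [if_neg (by omega), if_pos (by omega)]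
    simp
  have hW : (jac u (n + 1)).mulVec w = fun i => if i = Fin.last n then cont u (n + 1) else 0 := by
    rw [hwe]
    ext j
    rw [jac_mulVec u (n + 1) W (by simp [W]) (by simp [W])]
    have hj := j.2
    have key : ∀ m, m ≤ n → u m * W (m + 1) - W m = cont u (m + 1) := by
      intro m hm
      rcases m with _ | m
      · simp [W]
      · rw [cont_last]
        simp only [W]
        rw [if_neg (by omega), if_pos (by omega), if_neg (by omega), if_pos (by omega)]
        simp
    have := key j (by omega)
    rw [show u j * W (j + 1) - W (j + 2) - W j = cont u (j + 1) - W (j + 2) by linarith]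
    by_cases h0 : j = Fin.last n
    · simp [h0, W]
    · have h0' : (j : ℕ) ≠ n := fun e => h0 (Fin.ext e)
      rw [if_neg h0]
      simp only [W]
      rw [if_neg (by omega), if_pos (by omega)]
      simp
  rw [← inv_apply_of_mulVec _ (by rw [det_jac]; exact hd) w _ _ hW i]

/-- The diagonal sequence `E - λ f (T^i x)`. -/
def useq (lam : ℝ) (f : ℝ → ℝ) (T : Equiv.Perm ℝ) (E x : ℝ) (i : ℕ) : ℝ :=
  E - lam * f ((T ^ i) x)

lemma transferM_eq (lam : ℝ) (f : ℝ → ℝ) (T : Equiv.Perm ℝ) (E x : ℝ) (n : ℕ) :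
    transferM lam f T E x n = seqM (useq lam f T E x) n := by
  induction n with
  | zero => rfl
  | succ n ih => rw [transferM, seqM, ih]; rfl

lemma abs_cont_le (lam : ℝ) (f : ℝ → ℝ) (T : Equiv.Perm ℝ) (E x : ℝ) (n : ℕ) :
    |cont (useq lam f T E x) n| ≤ ‖transferM lam f T E x n‖ := by
  rw [transferM_eq]
  exact Matrix.norm_entry_le_entrywise_sup_norm (seqM (useq lam f T E x) n) (i := 0) (j := 0)

lemma HDir_sub_eq (lam : ℝ) (f : ℝ → ℝ) (T : Equiv.Perm ℝ) (E x : ℝ) (n : ℕ) :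
    HDir lam f T x n - E • (1 : Matrix (Fin n) (Fin n) ℝ) = - jac (useq lam f T E x) n := by
  ext i j
  by_cases h : i = j <;> simp [HDir, jac, useq, h]

lemma HBox_eq (lam : ℝ) (f : ℝ → ℝ) (T : Equiv.Perm ℝ) (x : ℝ) (a : ℤ) (n : ℕ) :
    HBox lam f T x a n = HDir lam f T ((T ^ a) x) n := by
  ext i j
  have : (T ^ (a + ((i : ℕ) : ℤ))) x = (T ^ (i : ℕ)) ((T ^ a) x) := by
    rw [add_comm, zpow_add, Equiv.Perm.mul_apply, zpow_natCast]
  simp [HBox, HDir, this]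

lemma abs_Pdet (lam : ℝ) (f : ℝ → ℝ) (T : Equiv.Perm ℝ) (E x : ℝ) (n : ℕ) :
    |Pdet lam f T x E n| = |cont (useq lam f T E x) n| := by
  rw [Pdet, HDir_sub_eq, Matrix.det_neg, det_jac, abs_mul]
  simp

lemma GBox_eq (lam : ℝ) (f : ℝ → ℝ) (T : Equiv.Perm ℝ) (x E : ℝ) (a : ℤ) (n : ℕ) (i j : Fin n)
    (hd : cont (useq lam f T E ((T ^ a) x)) n ≠ 0) :
    |GBox lam f T x E a n i j| = |(jac (useq lam f T E ((T ^ a) x)) n)⁻¹ i j| := by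
  have : (-(jac (useq lam f T E ((T ^ a) x)) n))⁻¹ = -(jac (useq lam f T E ((T ^ a) x)) n)⁻¹ := by
    apply Matrix.inv_eq_left_inv
    rw [neg_mul_neg, Matrix.nonsing_inv_mul]
    rw [det_jac]
    exact isUnit_iff_ne_zero.mpr hd
  rw [GBox, HBox_eq, HDir_sub_eq, this, Matrix.neg_apply, abs_neg]

/-! ### Translations, invariant integrals and upper envelopes -/

/-- Multiples of an irrational number come close to every real number modulo `1`, with a bound on
the multiplier that is uniform in the target. -/
lemma exists_uniform_multiple (β : ℝ) (hβ : Irrational β) (κ : ℝ) (hκ : 0 < κ) :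
    ∃ M : ℕ, ∀ θ : ℝ, ∃ k l : ℤ, |(k : ℝ)| ≤ M ∧ |θ + k * β - l| < κ := by
  obtain ⟨n, hn⟩ := exists_nat_one_div_lt hκ
  obtain ⟨j, k', hk0, hk1, h⟩ := Real.exists_int_int_abs_mul_sub_le β (n := n + 1) (by omega)
  set s : ℝ := k' * β - j with hs
  have hs0 : s ≠ 0 := by
    intro h0
    apply hβ
    refine ⟨(j : ℚ) / k', ?_⟩
    have : (k' : ℝ) ≠ 0 := by exact_mod_cast hk0.ne'
    push_cast
    field_simp
    linarith
  have hsκ : |s| < κ := by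
    refine lt_of_le_of_lt h (lt_of_le_of_lt ?_ hn)
    push_cast
    apply one_div_le_one_div_of_le <;> linarith [(Nat.cast_nonneg n : (0 : ℝ) ≤ n)]
  have hsp : 0 < |s| := abs_pos.mpr hs0
  refine ⟨⌈(1 / |s| + 1) * k'⌉₊, fun θ => ?_⟩
  set t := Int.fract θ with ht
  set c := ⌊t / s⌋ with hc
  refine ⟨-c * k', ⌊θ⌋ - c * j, ?_, ?_⟩
  · refine le_trans ?_ (Nat.le_ceil _)
    have hk0' : (0 : ℝ) ≤ k' := by exact_mod_cast hk0.le
    push_cast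
    rw [abs_mul, abs_neg, abs_of_nonneg hk0']
    apply mul_le_mul_of_nonneg_right _ hk0'
    have h1 : |t / s| ≤ 1 / |s| := by
      rw [abs_div, abs_of_nonneg (Int.fract_nonneg θ)]
      apply div_le_div_of_nonneg_right (Int.fract_lt_one θ).le hsp.le
    have h2 := Int.floor_le (t / s)
    have h3 := Int.lt_floor_add_one (t / s)
    rw [abs_le] at h1 ⊢
    constructor <;> linarith [h1.1, h1.2]
  · have e : θ + ((-c * k' : ℤ) : ℝ) * β - ((⌊θ⌋ - c * j : ℤ) : ℝ) = s * Int.fract (t / s) := by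
      have : s * Int.fract (t / s) = t - c * s := by
        rw [← Int.self_sub_floor, ← hc]
        field_simp
      rw [this, ht, ← Int.self_sub_floor, hs]
      push_cast
      ring
    rw [e, abs_mul, abs_of_nonneg (Int.fract_nonneg (t / s))]
    nlinarith [Int.fract_lt_one (t / s), Int.fract_nonneg (t / s)]

lemma interval_comp (ν : Measure ℝ) (S : ℝ ≃ ℝ) (hS : StrictMono S)
    (hinv : Measure.map S ν = ν) (F : ℝ → ℝ) (u v : ℝ) :
    ∫ t in (S u)..(S v), F t ∂ν = ∫ t in u..v, F (S t) ∂ν := by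
  have hemb : MeasurableEmbedding S :=
    (hS.orderIsoOfSurjective S S.surjective).toHomeomorph.measurableEmbedding
  have hmp : MeasurePreserving S ν ν := ⟨hemb.measurable, hinv⟩
  have hpre : ∀ a b, S ⁻¹' Set.Ioc (S a) (S b) = Set.Ioc a b := by
    intro a b
    ext t
    simp [hS.lt_iff_lt, hS.le_iff_le]
  simp only [intervalIntegral]
  rw [← hmp.setIntegral_preimage_emb hemb F (Set.Ioc (S u) (S v)),
    ← hmp.setIntegral_preimage_emb hemb F (Set.Ioc (S v) (S u)), hpre, hpre]

lemma interval_periodic (ν : Measure ℝ) [IsLocallyFiniteMeasure ν]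
    (hper : Measure.map (fun t : ℝ => t + 1) ν = ν) (F : ℝ → ℝ)
    (hFi : ∀ a b, IntervalIntegrable F ν a b) (hF : ∀ t, F (t + 1) = F t) (u : ℝ) :
    ∫ t in u..(u + 1), F t ∂ν = ∫ t in 0..1, F t ∂ν := by
  have h := interval_comp ν (Equiv.addRight (1 : ℝ)) (fun a b hab => by simpa using hab)
    (by simpa using hper) F 0 u
  simp only [Equiv.coe_addRight, zero_add, hF] at h
  have h1 := intervalIntegral.integral_add_adjacent_intervals (hFi u 0) (hFi 0 1)
  have h2 := intervalIntegral.integral_add_adjacent_intervals (hFi u 1) (hFi 1 (u + 1))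
  have h3 := intervalIntegral.integral_symm (μ := ν) (f := F) u 0
  linarith

lemma integral_invariant (ν : Measure ℝ) [IsLocallyFiniteMeasure ν]
    (hper : Measure.map (fun t : ℝ => t + 1) ν = ν) (S : ℝ ≃ ℝ) (hS : StrictMono S)
    (hinv : Measure.map S ν = ν) (hSper : ∀ t, S (t + 1) = S t + 1) (F : ℝ → ℝ)
    (hFi : ∀ a b, IntervalIntegrable F ν a b) (hF : ∀ t, F (t + 1) = F t) :
    ∫ t in 0..1, F (S t) ∂ν = ∫ t in 0..1, F t ∂ν := by
  rw [← interval_comp ν S hS hinv F 0 1, show S 1 = S 0 + 1 by rw [← hSper, zero_add]]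
  exact interval_periodic ν hper F hFi hF _

/-- Upper envelope of `g` at scale `r`: the supremum of `g` over the open ball of radius `r`. -/
def upEnv (g : ℝ → ℝ) (r x : ℝ) : ℝ := sSup (g '' Metric.ball x r)

lemma le_upEnv {g : ℝ → ℝ} {K : ℝ} (hK : ∀ x, |g x| ≤ K) {r x y : ℝ} (h : |y - x| < r) :
    g y ≤ upEnv g r x :=
  le_csSup ⟨K, by rintro _ ⟨z, -, rfl⟩; exact (abs_le.mp (hK z)).2⟩
    ⟨y, by simpa [Metric.mem_ball, Real.dist_eq] using h, rfl⟩

lemma abs_upEnv_le {g : ℝ → ℝ} {K : ℝ} (hK : ∀ x, |g x| ≤ K) {r : ℝ} (hr : 0 < r) (x : ℝ) :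
    |upEnv g r x| ≤ K := by
  rw [abs_le]
  constructor
  · exact (abs_le.mp (hK x)).1.trans (le_upEnv hK (by simpa using hr))
  · refine csSup_le ⟨g x, x, by simpa using hr, rfl⟩ ?_
    rintro _ ⟨z, -, rfl⟩
    exact (abs_le.mp (hK z)).2

/-- The envelope is lower semicontinuous, hence measurable, for every bounded `g`. -/
lemma measurable_upEnv {g : ℝ → ℝ} {K : ℝ} (hK : ∀ x, |g x| ≤ K) {r : ℝ} (hr : 0 < r) :
    Measurable (upEnv g r) := by
  apply LowerSemicontinuous.measurable
  intro x c hc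
  obtain ⟨_, ⟨z, hz, rfl⟩, hcz⟩ :=
    exists_lt_of_lt_csSup (⟨g x, x, by simpa using hr, rfl⟩ : (g '' Metric.ball x r).Nonempty) hc
  filter_upwards [Metric.isOpen_ball.mem_nhds (Metric.mem_ball_comm.mp hz)] with x' hx'
  refine hcz.trans_le (le_upEnv hK ?_)
  simpa [Metric.mem_ball, Real.dist_eq, abs_sub_comm] using hx'

lemma upEnv_periodic {g : ℝ → ℝ} (hg : ∀ t, g (t + 1) = g t) (r x : ℝ) :
    upEnv g r (x + 1) = upEnv g r x := by
  unfold upEnv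
  congr 1
  ext c
  constructor
  · rintro ⟨z, hz, rfl⟩
    refine ⟨z - 1, ?_, ?_⟩
    · simp only [Metric.mem_ball, Real.dist_eq] at hz ⊢
      rwa [show z - 1 - x = z - (x + 1) by ring]
    · rw [← hg, sub_add_cancel]
  · rintro ⟨z, hz, rfl⟩
    refine ⟨z + 1, ?_, hg z⟩
    simp only [Metric.mem_ball, Real.dist_eq] at hz ⊢
    rwa [show z + 1 - (x + 1) = z - x by ring]

lemma tendsto_upEnv {g : ℝ → ℝ} {K : ℝ} (hK : ∀ x, |g x| ≤ K) {x : ℝ} (hx : ContinuousAt g x) :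
    Tendsto (fun k : ℕ => upEnv g (1 / ((k : ℝ) + 1)) x) atTop (nhds (g x)) := by
  have hpos : ∀ k : ℕ, (0 : ℝ) < 1 / ((k : ℝ) + 1) := fun k => Nat.one_div_pos_of_nat
  rw [Metric.tendsto_atTop]
  intro ε hε
  obtain ⟨η, hη, h⟩ := Metric.continuousAt_iff.mp hx (ε / 2) (by linarith)
  obtain ⟨k0, hk0⟩ := exists_nat_one_div_lt hη
  refine ⟨k0, fun k hk => ?_⟩
  have h1 : g x ≤ upEnv g (1 / ((k : ℝ) + 1)) x := le_upEnv hK (by simpa using hpos k)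
  have h2 : upEnv g (1 / ((k : ℝ) + 1)) x ≤ g x + ε / 2 := by
    refine csSup_le ⟨g x, x, by simpa using hpos k, rfl⟩ ?_
    rintro _ ⟨z, hz, rfl⟩
    have hk' : 1 / ((k : ℝ) + 1) ≤ 1 / ((k0 : ℝ) + 1) := by
      apply one_div_le_one_div_of_le (by positivity)
      have : (k0 : ℝ) ≤ k := by exact_mod_cast hk
      linarith
    have := h (lt_trans (lt_of_lt_of_le (Metric.mem_ball.mp hz) hk') hk0)
    rw [Real.dist_eq, abs_lt] at this
    linarith [this.2]
  rw [Real.dist_eq, abs_lt]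
  constructor <;> linarith

lemma sum_shift_nat (a : ℤ → ℝ) (K : ℝ) (ha : ∀ i, |a i| ≤ K) (n k : ℕ) (c : ℤ) :
    |∑ i ∈ Finset.range n, a (i + c) - ∑ i ∈ Finset.range n, a (i + (c + k))| ≤ 2 * K * k := by
  induction k with
  | zero => simp
  | succ k ih =>
    have h1 : ∑ i ∈ Finset.range n, a (i + (c + k)) + a (n + (c + k))
        = ∑ i ∈ Finset.range n, a (i + (c + (k + 1 : ℕ))) + a (0 + (c + k)) := by
      have h2 := Finset.sum_range_succ (fun i : ℕ => a (i + (c + k))) n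
      have h3 := Finset.sum_range_succ' (fun i : ℕ => a (i + (c + k))) n
      rw [← h2, h3]
      push_cast
      congr 1
      refine Finset.sum_congr rfl fun i _ => ?_
      congr 1
      ring
    have h4 := abs_le.mp (ha (n + (c + k)))
    have h5 := abs_le.mp (ha (0 + (c + k)))
    rw [abs_le] at ih ⊢
    push_cast at *
    constructor <;> linarith [ih.1, ih.2, h4.1, h4.2, h5.1, h5.2]

lemma sum_shift (a : ℤ → ℝ) (K : ℝ) (ha : ∀ i, |a i| ≤ K) (n : ℕ) (k : ℤ) :
    ∑ i ∈ Finset.range n, a i ≤ ∑ i ∈ Finset.range n, a (i + k) + 2 * K * |(k : ℝ)| := by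
  rcases Int.le_total 0 k with hk | hk
  · obtain ⟨m, rfl⟩ := Int.eq_ofNat_of_zero_le hk
    have := abs_le.mp (sum_shift_nat a K ha n m 0)
    simp only [add_zero, zero_add] at this
    simp only [Int.cast_natCast, Nat.abs_cast]
    linarith [this.2]
  · obtain ⟨m, hm⟩ := Int.eq_ofNat_of_zero_le (neg_nonneg.mpr hk)
    obtain rfl : k = -m := by omega
    have := abs_le.mp (sum_shift_nat a K ha n m (-m))
    simp only [neg_add_cancel, add_zero] at this
    simp only [Int.cast_neg, Int.cast_natCast, abs_neg, Nat.abs_cast]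
    linarith [this.1]

/-! ### Uniform upper bounds on Birkhoff sums -/

/-- Any two orbits shadow each other up to a bounded time shift: if `h` commutes with
`t ↦ t + 1` and semiconjugates `S` to an irrational translation, and `h`-closeness implies closeness, then Birkhoff sums of `g` along one
orbit are bounded by those of its upper envelope along any other orbit. -/
lemma birkhoff_compare (h : ℝ → ℝ) (S : Equiv.Perm ℝ) (β : ℝ) (hβ : Irrational β)
    (hS : ∀ x, h (S x) = h x + β) (h1 : ∀ x, h (x + 1) = h x + 1)
    (r : ℝ) (hr : ∃ κ > 0, ∀ u v, |h u - h v| < κ → |u - v| < r)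
    (g : ℝ → ℝ) (hg : ∀ t, g (t + 1) = g t) (K : ℝ) (hK : ∀ x, |g x| ≤ K) :
    ∃ C : ℝ, ∀ (x y : ℝ) (n : ℕ), ∑ i ∈ Finset.range n, g ((S ^ i) x)
      ≤ ∑ i ∈ Finset.range n, upEnv g r ((S ^ i) y) + C := by
  obtain ⟨κ, hκ, hclose⟩ := hr
  obtain ⟨M, hM⟩ := exists_uniform_multiple β hβ κ hκ
  have hK0 : 0 ≤ K := (abs_nonneg _).trans (hK 0)
  have hSn : ∀ (i : ℕ) x, h ((S ^ i) x) = h x + i * β := by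
    intro i
    induction i with
    | zero => simp
    | succ i ih =>
      intro x
      rw [pow_succ', Equiv.Perm.mul_apply, hS, ih]
      push_cast
      ring
  have hSz : ∀ (k : ℤ) x, h ((S ^ k) x) = h x + k * β := by
    intro k x
    obtain ⟨m, rfl | rfl⟩ := Int.eq_nat_or_neg k
    · simpa using hSn m x
    · have := hSn m ((S ^ (-(m : ℤ))) x)
      rw [← zpow_natCast, ← Equiv.Perm.mul_apply, ← zpow_add] at this
      simp only [add_neg_cancel, zpow_zero, Equiv.Perm.one_apply] at this
      push_cast
      linarith
  have hhp : Function.Periodic (fun x => h x - x) 1 := fun x => by simp only [h1]; ring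
  have hhz : ∀ (l : ℤ) x, h (x + l) = h x + l := by
    intro l x
    have := hhp.int_mul l x
    simp only [mul_one] at this
    linarith
  refine ⟨2 * K * M, fun x y n => ?_⟩
  obtain ⟨k, l, hk, hl⟩ := hM (h x - h y)
  refine (sum_shift (fun i : ℤ => g ((S ^ i) x)) K (fun i => hK _) n k).trans ?_
  apply add_le_add
  · refine Finset.sum_le_sum fun i _ => ?_
    have hp : upEnv g r ((S ^ i) y + l) = upEnv g r ((S ^ i) y) := by
      have := Function.Periodic.int_mul (f := upEnv g r) (c := 1)
        (fun t => upEnv_periodic hg r t) l ((S ^ i) y)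
      simpa using this
    rw [← hp]
    apply le_upEnv hK
    apply hclose
    rw [hSz, hhz, hSn]
    convert hl using 2
    push_cast
    ring
  · exact mul_le_mul_of_nonneg_left hk (by linarith)

lemma intervalIntegrable_of_bdd (ν : Measure ℝ) [IsLocallyFiniteMeasure ν] (F : ℝ → ℝ)
    (hm : Measurable F) (K : ℝ) (hK : ∀ x, |F x| ≤ K) (a b : ℝ) : IntervalIntegrable F ν a b := by
  have hc : IntervalIntegrable (fun _ : ℝ => K) ν a b := intervalIntegrable_const
  exact hc.mono_fun' hm.aestronglyMeasurable (Eventually.of_forall hK)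

/-- Integrating `birkhoff_compare` over the second orbit: a uniform upper bound on Birkhoff sums by
the space average of the envelope. -/
lemma birkhoff_upper (ν : Measure ℝ) [IsLocallyFiniteMeasure ν]
    (hper : Measure.map (fun t : ℝ => t + 1) ν = ν) (hprob : ∫ _t in (0 : ℝ)..1, (1 : ℝ) ∂ν = 1)
    (h : ℝ → ℝ) (S : Equiv.Perm ℝ) (hSm : StrictMono S) (hinv : Measure.map S ν = ν)
    (hSper : ∀ t, S (t + 1) = S t + 1) (β : ℝ) (hβ : Irrational β)
    (hS : ∀ x, h (S x) = h x + β) (h1 : ∀ x, h (x + 1) = h x + 1)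
    (r : ℝ) (hr0 : 0 < r) (hr : ∃ κ > 0, ∀ u v, |h u - h v| < κ → |u - v| < r)
    (g : ℝ → ℝ) (hg : ∀ t, g (t + 1) = g t) (K : ℝ) (hK : ∀ x, |g x| ≤ K) :
    ∃ C : ℝ, ∀ (x : ℝ) (n : ℕ), ∑ i ∈ Finset.range n, g ((S ^ i) x)
      ≤ n * ∫ t in (0 : ℝ)..1, upEnv g r t ∂ν + C := by
  obtain ⟨C, hC⟩ := birkhoff_compare h S β hβ hS h1 r hr g hg K hK
  refine ⟨C, fun x n => ?_⟩
  have hSmeas : Measurable S := hSm.monotone.measurable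
  have hmeas : ∀ i : ℕ, Measurable fun y => upEnv g r ((S ^ i) y) := by
    intro i
    refine (measurable_upEnv hK hr0).comp ?_
    induction i with
    | zero => exact measurable_id
    | succ i ih =>
      have := hSmeas.comp ih
      simpa [pow_succ', Function.comp_def, Equiv.Perm.coe_mul] using this
  have hEnvInt : ∀ (i : ℕ) (a b : ℝ), IntervalIntegrable (fun y => upEnv g r ((S ^ i) y)) ν a b :=
    fun i a b => intervalIntegrable_of_bdd ν _ (hmeas i) K (fun y => abs_upEnv_le hK hr0 _) a b
  have hSiper : ∀ (i : ℕ) t, (S ^ i) (t + 1) = (S ^ i) t + 1 := by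
    intro i
    induction i with
    | zero => simp
    | succ i ih => intro t; simp only [pow_succ', Equiv.Perm.mul_apply, ih, hSper]
  have hconst : ∀ i : ℕ, ∫ y in (0 : ℝ)..1, upEnv g r ((S ^ i) y) ∂ν
      = ∫ y in (0 : ℝ)..1, upEnv g r y ∂ν := by
    intro i
    induction i with
    | zero => simp
    | succ i ih =>
      rw [← ih]
      have := integral_invariant ν hper S hSm hinv hSper (fun y => upEnv g r ((S ^ i) y)) (hEnvInt i)
        (fun t => by rw [hSiper, upEnv_periodic hg])
      simpa [pow_succ] using this
  have hL : ∫ _y in (0 : ℝ)..1, (∑ i ∈ Finset.range n, g ((S ^ i) x) - C) ∂ν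
      ≤ ∫ y in (0 : ℝ)..1, ∑ i ∈ Finset.range n, upEnv g r ((S ^ i) y) ∂ν := by
    apply intervalIntegral.integral_mono_on zero_le_one intervalIntegrable_const
    · have := IntervalIntegrable.sum (Finset.range n) fun i _ => hEnvInt i 0 1
      rw [show (fun u => ∑ i ∈ Finset.range n, upEnv g r ((S ^ i) u))
        = ∑ i ∈ Finset.range n, fun y => upEnv g r ((S ^ i) y) by ext y; simp]
      exact this
    · intro y _
      linarith [hC x y n]
  rw [intervalIntegral.integral_finsetSum fun i _ => hEnvInt i 0 1] at hL
  simp only [hconst, Finset.sum_const, Finset.card_range, nsmul_eq_mul] at hL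
  have hcst : ∀ c : ℝ, ∫ _y in (0 : ℝ)..1, c ∂ν = c := by
    intro c
    have := intervalIntegral.integral_const_mul (μ := ν) (a := 0) (b := 1) c (fun _ => (1 : ℝ))
    simpa [hprob] using this
  rw [hcst] at hL
  linarith

/-! ### Conjugacy to a translation -/

/-- Comparability of `ν` with Lebesgue measure makes `ν` locally finite and atomless: an
infinite mass would have `toReal` equal to `0`, against the lower bound on it. -/
lemma nu_regular (ν : Measure ℝ) (Cm Cp : ℝ) (hCm : 0 < Cm)
    (hcomp : ∀ u v : ℝ, u ≤ v → v ≤ u + 1 →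
      Cm * (ν (Set.Icc u v)).toReal ≤ v - u ∧ v - u ≤ Cp * (ν (Set.Icc u v)).toReal) :
    IsLocallyFiniteMeasure ν ∧ NullSingletonClass ν := by
  have hfin : ∀ x : ℝ, ν (Set.Icc (x - 1 / 2) (x + 1 / 2)) < ⊤ := by
    intro x
    have h := (hcomp (x - 1 / 2) (x + 1 / 2) (by linarith) (by linarith)).2
    by_contra hc
    rw [not_lt, top_le_iff] at hc
    rw [hc] at h
    norm_num at h
  refine ⟨⟨fun x => ⟨_, Icc_mem_nhds (by linarith) (by linarith), hfin x⟩⟩, ⟨fun x => ?_⟩⟩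
  have h := (hcomp x x le_rfl (by linarith)).1
  rw [Set.Icc_self, sub_self] at h
  have h0 : (ν {x}).toReal = 0 :=
    le_antisymm (by by_contra hc; nlinarith) ENNReal.toReal_nonneg
  rcases (ENNReal.toReal_eq_zero_iff _).mp h0 with h1 | h1
  · exact h1
  · have : ν {x} ≤ ν (Set.Icc (x - 1 / 2) (x + 1 / 2)) :=
      measure_mono (Set.singleton_subset_iff.mpr ⟨by linarith, by linarith⟩)
    rw [h1] at this
    exact absurd (hfin x) (not_lt.mpr this)

/-- The distribution function of `ν` conjugates `T` to the translation by its rotation number. -/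
lemma exists_conj (ν : Measure ℝ) [IsLocallyFiniteMeasure ν] [NullSingletonClass ν] (T : Equiv.Perm ℝ)
    (Cp α : ℝ) (hTmono : StrictMono ⇑T)
    (hrot : Filter.Tendsto (fun m : ℕ => (T ^ m) 0 / (m : ℝ)) Filter.atTop (nhds α))
    (hCp : 0 < Cp)
    (hνinv : MeasureTheory.Measure.map (⇑T) ν = ν)
    (hνper : MeasureTheory.Measure.map (fun t : ℝ => t + 1) ν = ν)
    (hprob : ∫ _t in (0 : ℝ)..1, (1 : ℝ) ∂ν = 1)
    (hcomp : ∀ u v : ℝ, u ≤ v → v ≤ u + 1 → v - u ≤ Cp * (ν (Set.Icc u v)).toReal) :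
    ∃ h : ℝ → ℝ, (∀ x, h (T x) = h x + α) ∧ (∀ x, h (x + 1) = h x + 1) ∧
      ∀ r > 0, ∃ κ > 0, ∀ u v, |h u - h v| < κ → |u - v| < r := by
  have hI : ∀ a b : ℝ, IntervalIntegrable (fun _ => (1 : ℝ)) ν a b :=
    fun a b => intervalIntegrable_const
  let h : ℝ → ℝ := fun x => ∫ _t in (0 : ℝ)..x, (1 : ℝ) ∂ν
  have hdiff : ∀ u v, h v - h u = ∫ _t in u..v, (1 : ℝ) ∂ν := fun u v =>
    intervalIntegral.integral_interval_sub_left (hI 0 v) (hI 0 u)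
  have hreal : ∀ u v, u ≤ v → h v - h u = (ν (Set.Icc u v)).toReal := by
    intro u v huv
    rw [hdiff, intervalIntegral.integral_of_le huv, ← integral_Icc_eq_integral_Ioc]
    simp [Measure.real]
  have hper : ∀ x, h (x + 1) = h x + 1 := by
    intro x
    have := interval_periodic ν hνper (fun _ => (1 : ℝ)) hI (fun _ => rfl) x
    rw [hprob, ← hdiff] at this
    linarith
  have hmono : Monotone h := by
    intro u v huv
    have := hreal u v huv
    have : (0 : ℝ) ≤ (ν (Set.Icc u v)).toReal := ENNReal.toReal_nonneg
    linarith
  have hTd : ∀ x, h (T x) = h x + h (T 0) := by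
    intro x
    have := interval_comp ν T hTmono hνinv (fun _ => (1 : ℝ)) 0 x
    rw [← hdiff, ← hdiff] at this
    have h0 : h 0 = 0 := by simp [h]
    linarith
  have hTn : ∀ m : ℕ, h ((T ^ m) 0) = m * h (T 0) := by
    intro m
    induction m with
    | zero => simp [h]
    | succ m ih =>
      rw [pow_succ', Equiv.Perm.mul_apply, hTd, ih]
      push_cast
      ring
  -- `h` stays within distance `1` of the identity, so both have the same drift along orbits.
  have hid : ∀ x, |x - h x| ≤ 1 := by
    intro x
    have hp : Function.Periodic (fun x => h x - x) 1 := fun x => by simp only [hper]; ring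
    have e := hp.sub_int_mul_eq (x := x) ⌊x⌋
    simp only [mul_one, Int.self_sub_floor] at e
    have a1 : h 0 ≤ h (Int.fract x) := hmono (Int.fract_nonneg x)
    have a2 : h (Int.fract x) ≤ h 1 := hmono (Int.fract_lt_one x).le
    have a3 : h 0 = 0 := by simp [h]
    have a4 : h 1 = 1 := hprob
    have a5 := Int.fract_nonneg x
    have a6 := Int.fract_lt_one x
    rw [abs_le]
    constructor <;> linarith
  have hρ : h (T 0) = α := by
    refine tendsto_nhds_unique ?_ hrot
    rw [tendsto_iff_norm_sub_tendsto_zero]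
    refine squeeze_zero' (Eventually.of_forall fun _ => norm_nonneg _) ?_
      tendsto_one_div_atTop_nhds_zero_nat
    filter_upwards [eventually_gt_atTop 0] with m hm
    have hm' : (0 : ℝ) < m := by exact_mod_cast hm
    have : (T ^ m) 0 / (m : ℝ) - h (T 0) = ((T ^ m) 0 - h ((T ^ m) 0)) / m := by
      rw [hTn]; field_simp
    rw [this, norm_div, Real.norm_eq_abs, Real.norm_eq_abs, abs_of_pos hm']
    exact div_le_div_of_nonneg_right (hid _) hm'.le
  refine ⟨h, fun x => by rw [hTd, hρ], hper, fun r hr => ?_⟩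
  have key : ∀ u v, u ≤ v → h v - h u < min 1 (r / Cp) → v - u < r := by
    intro u v huv hlt
    have hlt1 : h v - h u < 1 := hlt.trans_le (min_le_left _ _)
    have hv : v ≤ u + 1 := by
      by_contra hc
      have := hmono (not_le.mp hc).le
      rw [hper] at this
      linarith
    have h2 := hcomp u v huv hv
    rw [← hreal u v huv] at h2
    have h3 : h v - h u < r / Cp := hlt.trans_le (min_le_right _ _)
    rw [lt_div_iff₀ hCp] at h3
    linarith
  refine ⟨min 1 (r / Cp), lt_min one_pos (div_pos hr hCp), fun u v huv => ?_⟩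
  rw [abs_lt] at huv
  rcases le_total u v with hle | hle
  · rw [abs_sub_comm, abs_of_nonneg (by linarith)]
    exact key u v hle (by linarith [huv.1])
  · rw [abs_of_nonneg (by linarith)]
    exact key v u hle (by linarith [huv.2])

/-! ### The sampling function and transfer matrices -/

lemma f_bdd (f : ℝ → ℝ) (γm γp : ℝ) (hγm : 0 < γm) (hγp : 0 < γp)
    (hfper : ∀ t : ℝ, f (t + 1) = f t) (hf0 : f 0 = 0)
    (hfLip : ∀ u v : ℝ, 0 ≤ u → u < v → v < 1 →
      γm * (v - u) ≤ f v - f u ∧ f v - f u ≤ γp * (v - u)) (t : ℝ) : |f t| ≤ γp := by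
  have e := Function.Periodic.sub_int_mul_eq (f := f) (c := 1) hfper (x := t) ⌊t⌋
  simp only [mul_one, Int.self_sub_floor] at e
  rw [← e]
  have h1 := Int.fract_lt_one t
  rcases (Int.fract_nonneg t).eq_or_lt with h | h
  · rw [← h, hf0, abs_zero]
    exact hγp.le
  · have := hfLip 0 (Int.fract t) le_rfl h h1
    rw [hf0] at this
    rw [abs_le]
    constructor <;> nlinarith [this.1, this.2]

lemma f_cont (f : ℝ → ℝ) (γm γp : ℝ) (hγm : 0 < γm)
    (hfper : ∀ t : ℝ, f (t + 1) = f t)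
    (hfLip : ∀ u v : ℝ, 0 ≤ u → u < v → v < 1 →
      γm * (v - u) ≤ f v - f u ∧ f v - f u ≤ γp * (v - u)) (t : ℝ)
    (ht : ∀ l : ℤ, t ≠ l) : ContinuousAt f t := by
  have e : f = f ∘ Int.fract := by
    ext s
    have := Function.Periodic.sub_int_mul_eq (f := f) (c := 1) hfper (x := s) ⌊s⌋
    simpa [Int.self_sub_floor] using this.symm
  have hL : LipschitzOnWith (Real.toNNReal γp) f (Set.Ico 0 1) := by
    apply LipschitzOnWith.of_dist_le_mul
    have key : ∀ u ∈ Set.Ico (0 : ℝ) 1, ∀ v ∈ Set.Ico (0 : ℝ) 1, u < v →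
        |f u - f v| ≤ Real.toNNReal γp * |u - v| := by
      intro u hu v hv huv
      have := hfLip u v hu.1 huv hv.2
      rw [abs_sub_comm, abs_of_nonneg (by nlinarith [this.1]), abs_sub_comm u v,
        abs_of_pos (by linarith)]
      refine this.2.trans ?_
      exact mul_le_mul_of_nonneg_right (Real.le_coe_toNNReal γp) (by linarith)
    intro u hu v hv
    rw [Real.dist_eq, Real.dist_eq]
    rcases lt_trichotomy u v with h | h | h
    · exact key u hu v hv h
    · simp [h]
    · rw [abs_sub_comm, abs_sub_comm u v]
      exact key v hv u hu h
  have hpos : 0 < Int.fract t := by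
    refine (Int.fract_nonneg t).lt_of_ne' ?_
    rw [Int.fract_ne_zero_iff]
    rintro ⟨l, hl⟩
    exact ht l hl.symm
  rw [e]
  apply ContinuousAt.comp
  · exact hL.continuousOn.continuousAt (Ico_mem_nhds hpos (Int.fract_lt_one t))
  · exact continuousAt_fract (ht _)

lemma norm_mul_le_two (A B : Matrix (Fin 2) (Fin 2) ℝ) : ‖A * B‖ ≤ 2 * ‖A‖ * ‖B‖ := by
  rw [Matrix.norm_le_iff (by positivity)]
  intro i j
  rw [Matrix.mul_apply, Fin.sum_univ_two]
  have a : ∀ k, ‖A i k * B k j‖ ≤ ‖A‖ * ‖B‖ := fun k => by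
    rw [norm_mul]
    exact mul_le_mul (Matrix.norm_entry_le_entrywise_sup_norm A)
      (Matrix.norm_entry_le_entrywise_sup_norm B) (norm_nonneg _) (norm_nonneg _)
  calc _ ≤ _ := norm_add_le _ _
    _ ≤ ‖A‖ * ‖B‖ + ‖A‖ * ‖B‖ := add_le_add (a 0) (a 1)
    _ = _ := by ring

lemma transferM_add (lam : ℝ) (f : ℝ → ℝ) (T : Equiv.Perm ℝ) (E x : ℝ) (m n : ℕ) :
    transferM lam f T E x (m + n)
      = transferM lam f T E ((T ^ n) x) m * transferM lam f T E x n := by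
  induction m with
  | zero => simp [transferM]
  | succ m ih =>
    rw [show m + 1 + n = (m + n) + 1 by omega, transferM, ih, transferM, Matrix.mul_assoc]
    congr 1
    simp [transferA, pow_add]

lemma transferM_det (lam : ℝ) (f : ℝ → ℝ) (T : Equiv.Perm ℝ) (E x : ℝ) (n : ℕ) :
    (transferM lam f T E x n).det = 1 := by
  induction n with
  | zero => simp [transferM]
  | succ n ih => rw [transferM, Matrix.det_mul, ih]; simp [transferA]

lemma half_le_norm (lam : ℝ) (f : ℝ → ℝ) (T : Equiv.Perm ℝ) (E x : ℝ) (n : ℕ) :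
    1 / 2 ≤ ‖transferM lam f T E x n‖ := by
  have hd := transferM_det lam f T E x n
  set M := transferM lam f T E x n
  rw [Matrix.det_fin_two] at hd
  have a : ∀ i j, |M i j| ≤ ‖M‖ := fun i j => Matrix.norm_entry_le_entrywise_sup_norm M
  have h1 : |M 0 0 * M 1 1| ≤ ‖M‖ * ‖M‖ := by
    rw [abs_mul]; exact mul_le_mul (a _ _) (a _ _) (abs_nonneg _) (norm_nonneg _)
  have h2 : |M 0 1 * M 1 0| ≤ ‖M‖ * ‖M‖ := by
    rw [abs_mul]; exact mul_le_mul (a _ _) (a _ _) (abs_nonneg _) (norm_nonneg _)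
  rw [abs_le] at h1 h2
  nlinarith [norm_nonneg M, h1.2, h2.1]

lemma norm_transferM_le (lam : ℝ) (f : ℝ → ℝ) (T : Equiv.Perm ℝ) (E γp : ℝ)
    (hf : ∀ t, |f t| ≤ γp) :
    ∃ B : ℝ, 1 ≤ B ∧ ∀ x n, ‖transferM lam f T E x n‖ ≤ B ^ n := by
  have hγ : 0 ≤ γp := (abs_nonneg _).trans (hf 0)
  have hB : 0 ≤ |E| + |lam| * γp := by positivity
  have hA : ∀ x n, ‖transferA lam f T E x n‖ ≤ |E| + |lam| * γp + 1 := by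
    intro x n
    rw [Matrix.norm_le_iff (by positivity)]
    have h0 : |E - lam * f ((T ^ n) x)| ≤ |E| + |lam| * γp := by
      refine (abs_sub _ _).trans ?_
      rw [abs_mul]
      gcongr
      exact hf _
    intro i j
    fin_cases i <;> fin_cases j <;> simp [transferA] <;> linarith
  refine ⟨2 * (|E| + |lam| * γp + 1), by linarith, fun x n => ?_⟩
  induction n with
  | zero =>
    rw [Matrix.norm_le_iff (by positivity)]
    intro i j
    fin_cases i <;> fin_cases j <;> simp [transferM]
  | succ n ih =>
    rw [transferM, pow_succ']
    refine (norm_mul_le_two _ _).trans ?_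
    gcongr
    exact hA x n

lemma transferM_continuousAt (lam : ℝ) (f : ℝ → ℝ) (T : Equiv.Perm ℝ) (E x : ℝ)
    (hT : Continuous T) (n : ℕ) (hx : ∀ i < n, ContinuousAt f ((T ^ i) x)) :
    ContinuousAt (fun y => transferM lam f T E y n) x := by
  induction n with
  | zero => simpa [transferM] using continuousAt_const
  | succ n ih =>
    simp only [transferM]
    apply ContinuousAt.mul _ (ih fun i hi => hx i (by omega))
    have hTn : Continuous (T ^ n) := by
      clear ih hx
      induction n with
      | zero => exact continuous_id
      | succ n ih =>
        rw [pow_succ']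
        exact hT.comp ih
    have hf : ContinuousAt (fun y => f ((T ^ n) y)) x :=
      ContinuousAt.comp (g := f) (hx n (by omega)) hTn.continuousAt
    refine continuousAt_pi.mpr fun i => continuousAt_pi.mpr fun j => ?_
    fin_cases i <;> fin_cases j <;> simp only [transferA] <;> simp
    · exact continuousAt_const.sub (continuousAt_const.mul hf)
    all_goals exact continuousAt_const

/-- Submultiplicativity along blocks of length `N`. The terms `log 2` come from the entrywise
sup norm, which is submultiplicative only up to the factor `2`. -/
lemma log_norm_blocks (lam : ℝ) (f : ℝ → ℝ) (T : Equiv.Perm ℝ) (E B : ℝ) (hB1 : 1 ≤ B)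
    (hB : ∀ x n, ‖transferM lam f T E x n‖ ≤ B ^ n) (N : ℕ) (x : ℝ) (r s : ℕ) (hr : r ≤ N) :
    Real.log ‖transferM lam f T E x (r + N * s)‖ ≤
      ∑ i ∈ Finset.range s, Real.log ‖transferM lam f T E (((T ^ N) ^ i) x) N‖
        + s * Real.log 2 + (Real.log 2 + 2 * N * Real.log B) := by
  have hpos : ∀ x n, 0 < ‖transferM lam f T E x n‖ := fun x n =>
    lt_of_lt_of_le (by norm_num) (half_le_norm lam f T E x n)
  have hlB : 0 ≤ Real.log B := Real.log_nonneg hB1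
  have hstep : ∀ m n, Real.log ‖transferM lam f T E x (m + n)‖
      ≤ Real.log 2 + Real.log ‖transferM lam f T E ((T ^ n) x) m‖
        + Real.log ‖transferM lam f T E x n‖ := by
    intro m n
    rw [← Real.log_mul (by norm_num) (hpos _ _).ne', ← Real.log_mul (by simpa using (hpos _ _).ne')
      (hpos _ _).ne', transferM_add]
    apply Real.log_le_log _ (norm_mul_le_two _ _)
    rw [← transferM_add]
    exact hpos _ _
  have hlog : ∀ y n, Real.log ‖transferM lam f T E y n‖ ≤ n * Real.log B := by
    intro y n
    rw [← Real.log_pow]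
    exact Real.log_le_log (hpos _ _) (hB y n)
  have hmain : Real.log ‖transferM lam f T E x (N * s)‖ ≤
      ∑ i ∈ Finset.range s, Real.log ‖transferM lam f T E (((T ^ N) ^ i) x) N‖
        + s * Real.log 2 := by
    induction s with
    | zero => simpa using hlog x 0
    | succ s ih =>
      rw [Finset.sum_range_succ, Nat.mul_succ, Nat.add_comm]
      have := hstep N (N * s)
      rw [← pow_mul, Nat.cast_succ]
      linarith
  have h1 := hstep r (N * s)
  have h2 := hlog ((T ^ (N * s)) x) r
  have h3 : (r : ℝ) * Real.log B ≤ N * Real.log B := by gcongr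
  have h4 : 0 ≤ (N : ℝ) * Real.log B := by positivity
  linarith

/-! ### Uniform growth of transfer matrices -/

/-- Uniform upper bound on transfer matrices: the Lyapunov exponent bounds the exponential growth
rate simultaneously for all phases `x`, in spite of the jump of `f`. -/
lemma uniform_upper
    (f : ℝ → ℝ) (T : Equiv.Perm ℝ) (ν : Measure ℝ)
    (γm γp Cm Cp lam α : ℝ) (E LE : ℝ)
    (hγm : 0 < γm) (hγp : 0 < γp)
    (hfper : ∀ t : ℝ, f (t + 1) = f t) (hf0 : f 0 = 0)
    (hfLip : ∀ u v : ℝ, 0 ≤ u → u < v → v < 1 →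
      γm * (v - u) ≤ f v - f u ∧ f v - f u ≤ γp * (v - u))
    (hTmono : StrictMono ⇑T) (hTper : ∀ t : ℝ, T (t + 1) = T t + 1)
    (hαirr : Irrational α)
    (hrot : Filter.Tendsto (fun m : ℕ => (T ^ m) 0 / (m : ℝ)) Filter.atTop (nhds α))
    (hCm : 0 < Cm) (hCp : 0 < Cp)
    (hνprob : ν (Set.Ico (0 : ℝ) 1) = 1)
    (hνinv : MeasureTheory.Measure.map (⇑T) ν = ν)
    (hνper : MeasureTheory.Measure.map (fun t : ℝ => t + 1) ν = ν)
    (hcomp : ∀ u v : ℝ, u ≤ v → v ≤ u + 1 →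
      Cm * (ν (Set.Icc u v)).toReal ≤ v - u ∧ v - u ≤ Cp * (ν (Set.Icc u v)).toReal)
    (hLya : Filter.Tendsto (fun m : ℕ =>
      (1 / (m : ℝ)) * ∫ x in Set.Ico (0 : ℝ) 1, Real.log ‖transferM lam f T E x m‖ ∂ν)
      Filter.atTop (nhds LE))
    (hLE : 0 < LE) (ε : ℝ) (hε : 0 < ε) :
    ∃ n0 : ℕ, ∀ n : ℕ, n0 ≤ n → ∀ x : ℝ,
      ‖transferM lam f T E x n‖ ≤ Real.exp (n * (LE + ε)) := by
  obtain ⟨hlf, hna⟩ := nu_regular ν Cm Cp hCm hcomp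
  have hIco : ∀ F : ℝ → ℝ, ∫ t in Set.Ico (0 : ℝ) 1, F t ∂ν = ∫ t in (0 : ℝ)..1, F t ∂ν := by
    intro F
    rw [intervalIntegral.integral_of_le zero_le_one, integral_Ico_eq_integral_Ioo,
      integral_Ioc_eq_integral_Ioo]
  have hprob : ∫ _t in (0 : ℝ)..1, (1 : ℝ) ∂ν = 1 := by
    rw [← hIco]
    simp [Measure.real, hνprob]
  obtain ⟨h, hhT, hh1, hhr⟩ := exists_conj ν T Cp α hTmono hrot hCp hνinv hνper hprob
    (fun u v h1 h2 => (hcomp u v h1 h2).2)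
  have hfb := f_bdd f γm γp hγm hγp hfper hf0 hfLip
  obtain ⟨B, hB1, hB⟩ := norm_transferM_le lam f T E γp hfb
  have hpos : ∀ x n, 0 < ‖transferM lam f T E x n‖ := fun x n =>
    lt_of_lt_of_le (by norm_num) (half_le_norm lam f T E x n)
  -- A block length `N` at which the space average is close to the Lyapunov exponent.
  have hlog2 : Tendsto (fun m : ℕ => Real.log 2 / (m : ℝ)) atTop (nhds 0) :=
    tendsto_const_div_atTop_nhds_zero_nat _
  obtain ⟨N, hN1, hN2, hN3⟩ :=
    ((hLya.eventually_lt_const (show LE < LE + ε / 8 by linarith)).and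
      ((hlog2.eventually_lt_const (show 0 < ε / 8 by linarith)).and
        (eventually_gt_atTop 0))).exists
  have hN : (1 : ℝ) ≤ N := by exact_mod_cast hN3
  have hN0 : (0 : ℝ) < N := by linarith
  set g : ℝ → ℝ := fun x => Real.log ‖transferM lam f T E x N‖ with hg
  have hgK : ∀ x, |g x| ≤ Real.log 2 + N * Real.log B := by
    intro x
    have h1 : Real.log (1 / 2) ≤ g x := Real.log_le_log (by norm_num) (half_le_norm lam f T E x N)
    have h2 : g x ≤ N * Real.log B := by
      rw [← Real.log_pow]
      exact Real.log_le_log (hpos _ _) (hB x N)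
    have h3 : 0 ≤ N * Real.log B := mul_nonneg hN0.le (Real.log_nonneg hB1)
    have h4 : 0 < Real.log 2 := Real.log_pos (by norm_num)
    rw [one_div, Real.log_inv] at h1
    rw [abs_le]
    constructor <;> linarith
  have hTiper : ∀ (i : ℕ) t, (T ^ i) (t + 1) = (T ^ i) t + 1 := by
    intro i
    induction i with
    | zero => simp
    | succ i ih => intro t; simp only [pow_succ', Equiv.Perm.mul_apply, ih, hTper]
  have hgper : ∀ t, g (t + 1) = g t := by
    intro t
    have : ∀ n, transferM lam f T E (t + 1) n = transferM lam f T E t n := by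
      intro n
      induction n with
      | zero => rfl
      | succ n ih =>
        rw [transferM, transferM, ih]
        congr 1
        rw [transferA, transferA, hTiper, hfper]
    simp only [hg, this]
  have hTcont : Continuous T := (hTmono.orderIsoOfSurjective T T.surjective).continuous
  have hgcont : ∀ᵐ x ∂ν, ContinuousAt g x := by
    have hc : (Set.range fun p : ℕ × ℤ => (T ^ p.1).symm (p.2 : ℝ)).Countable :=
      Set.countable_range _
    filter_upwards [measure_eq_zero_iff_ae_notMem.mp (hc.measure_zero ν)] with x hx
    have hM := transferM_continuousAt lam f T E x hTcont N (fun i _ => by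
      apply f_cont f γm γp hγm hfper hfLip
      intro l hl
      exact hx ⟨(i, l), by simp only; rw [← hl, Equiv.symm_apply_apply]⟩)
    exact (hM.norm).log (hpos x N).ne'
  have hlim : Tendsto (fun k : ℕ => ∫ t in (0 : ℝ)..1, upEnv g (1 / ((k : ℝ) + 1)) t ∂ν) atTop
      (nhds (∫ t in (0 : ℝ)..1, g t ∂ν)) := by
    have hp : ∀ k : ℕ, (0 : ℝ) < 1 / ((k : ℝ) + 1) := fun k => Nat.one_div_pos_of_nat
    apply intervalIntegral.tendsto_integral_filter_of_dominated_convergence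
      (fun _ => Real.log 2 + N * Real.log B)
    · exact Eventually.of_forall fun k => (measurable_upEnv hgK (hp k)).aestronglyMeasurable
    · exact Eventually.of_forall fun k => Eventually.of_forall fun x _ => abs_upEnv_le hgK (hp k) x
    · exact intervalIntegrable_const
    · filter_upwards [hgcont] with x hx _
      exact tendsto_upEnv hgK hx
  obtain ⟨k, hk⟩ := (hlim.eventually_lt_const
    (show ∫ t in (0 : ℝ)..1, g t ∂ν < (∫ t in (0 : ℝ)..1, g t ∂ν) + ε / 8 by linarith)).exists
  rw [hIco] at hN1
  set r : ℝ := 1 / ((k : ℝ) + 1) with hrdef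
  have hr0 : 0 < r := Nat.one_div_pos_of_nat
  -- The block map `T ^ N` is again conjugate to an irrational translation.
  have hpow : ∀ m : ℕ, StrictMono (T ^ m) ∧ Measure.map (T ^ m) ν = ν ∧
      ∀ x, h ((T ^ m) x) = h x + m * α := by
    intro m
    induction m with
    | zero => exact ⟨strictMono_id, by simp, by simp⟩
    | succ m ih =>
      obtain ⟨i1, i2, i3⟩ := ih
      rw [pow_succ', Equiv.Perm.coe_mul]
      refine ⟨hTmono.comp i1, ?_, fun x => ?_⟩
      · rw [← Measure.map_map hTcont.measurable i1.monotone.measurable, i2, hνinv]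
      · rw [Function.comp_apply, hhT, i3]
        push_cast
        ring
  obtain ⟨hS1, hS2, hS3⟩ := hpow N
  obtain ⟨C, hC⟩ := birkhoff_upper ν hνper hprob h (T ^ N) hS1 hS2 (hTiper N) (N * α)
    (hαirr.natCast_mul (by omega)) hS3 hh1 r hr0 (hhr r hr0) g hgper _ hgK
  set I := ∫ t in (0 : ℝ)..1, upEnv g r t ∂ν with hI
  have hQ : I + Real.log 2 ≤ N * (LE + ε / 2) := by
    rw [div_lt_iff₀ hN0] at hN2
    rw [one_div, inv_mul_lt_iff₀ hN0] at hN1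
    nlinarith
  obtain ⟨n0, hn0⟩ := exists_nat_ge ((C + (Real.log 2 + 2 * N * Real.log B)) / (ε / 2))
  refine ⟨n0, fun n hn x => ?_⟩
  rw [← Real.log_le_iff_le_exp (hpos x n)]
  have hdiv : n % N + N * (n / N) = n := Nat.mod_add_div n N
  have h1 := log_norm_blocks lam f T E B hB1 hB N x (n % N) (n / N) (Nat.mod_lt _ hN3).le
  rw [hdiv] at h1
  have h2 := hC x (n / N)
  have h3 : ((n / N : ℕ) : ℝ) * (I + Real.log 2) ≤ n * (LE + ε / 2) := by
    have h5 : ((n / N : ℕ) : ℝ) * N ≤ n := by exact_mod_cast Nat.div_mul_le_self n N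
    calc _ ≤ ((n / N : ℕ) : ℝ) * (N * (LE + ε / 2)) := by gcongr
      _ = ((n / N : ℕ) : ℝ) * N * (LE + ε / 2) := by ring
      _ ≤ _ := by gcongr
  have h4 : C + (Real.log 2 + 2 * N * Real.log B) ≤ n * (ε / 2) := by
    rw [div_le_iff₀ (by linarith)] at hn0
    have : (n0 : ℝ) ≤ n := by exact_mod_cast hn
    nlinarith
  simp only [hg] at h2
  linarith

lemma q_tendsto (α : ℝ) (q : ℕ → ℕ) (hαirr : Irrational α)
    (hqcf : ∀ m : ℕ, ((q m : ℕ) : ℝ) = (GenContFract.of α).dens m) (Q : ℕ) :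
    ∃ k0, ∀ k, k0 ≤ k → Q ≤ q k := by
  have hnt : ¬ (GenContFract.of α).Terminates := by
    rw [GenContFract.terminates_iff_rat]
    rintro ⟨p, hp⟩
    exact hαirr ⟨p, hp.symm⟩
  refine ⟨max Q 5, fun k hk => ?_⟩
  have h1 : (Nat.fib (k + 1) : ℝ) ≤ (GenContFract.of α).dens k :=
    GenContFract.succ_nth_fib_le_of_nth_den (Or.inr fun ht => hnt ⟨_, ht⟩)
  rw [← hqcf] at h1
  have h2 : Nat.fib (k + 1) ≤ q k := by exact_mod_cast h1
  have h3 : k + 1 ≤ Nat.fib (k + 1) := Nat.le_fib_self (by omega)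
  omega

/-! ### Singular points -/

/-- Singular points force large-deviation points: for large `k`, if `n`
is `(x, L(E) − δ, q_k)`-singular then `|P_{q_k}(T^a x, E)| ≤ e^{q_k(L(E) − δ/10)}` for all
`a ∈ [n − ⌊3q_k/4⌋, n − ⌊q_k/4⌋]`; moreover the number `N_k` of such `a` satisfies
`(q_k + 1)/2 ≤ N_k ≤ (q_k + 3)/2`. -/
theorem singular_implies_large_deviation
    (f : ℝ → ℝ) (T : Equiv.Perm ℝ) (ν : Measure ℝ)
    (γm γp Cm Cp lam α : ℝ) (q : ℕ → ℕ) (E LE δ : ℝ)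
    (hγm : 0 < γm) (hγp : 0 < γp) (hlam : 0 < lam)
    (hfper : ∀ t : ℝ, f (t + 1) = f t) (hf0 : f 0 = 0)
    (hf1 : Filter.Tendsto f (nhdsWithin 1 (Set.Iio 1)) (nhds 1))
    (hfLip : ∀ u v : ℝ, 0 ≤ u → u < v → v < 1 →
      γm * (v - u) ≤ f v - f u ∧ f v - f u ≤ γp * (v - u))
    (hTmono : StrictMono ⇑T) (hTper : ∀ t : ℝ, T (t + 1) = T t + 1)
    (hαirr : Irrational α)
    (hrot : Filter.Tendsto (fun m : ℕ => (T ^ m) 0 / (m : ℝ)) Filter.atTop (nhds α))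
    (hCm : 0 < Cm) (hCp : 0 < Cp)
    (hνprob : ν (Set.Ico (0 : ℝ) 1) = 1)
    (hνinv : MeasureTheory.Measure.map (⇑T) ν = ν)
    (hνper : MeasureTheory.Measure.map (fun t : ℝ => t + 1) ν = ν)
    (hcomp : ∀ u v : ℝ, u ≤ v → v ≤ u + 1 →
      Cm * (ν (Set.Icc u v)).toReal ≤ v - u ∧ v - u ≤ Cp * (ν (Set.Icc u v)).toReal)
    (hqpos : ∀ m : ℕ, 0 < q m)
    (hqcf : ∀ m : ℕ, ((q m : ℕ) : ℝ) = (GenContFract.of α).dens m)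
    (hLya : Filter.Tendsto (fun m : ℕ =>
      (1 / (m : ℝ)) * ∫ x in Set.Ico (0 : ℝ) 1, Real.log ‖transferM lam f T E x m‖ ∂ν)
      Filter.atTop (nhds LE))
    (hδ0 : 0 < δ) (hδL : δ < LE) :
    (∀ k : ℕ, ((q k : ℝ) + 1) / 2 ≤ ((3 * q k / 4 - q k / 4 + 1 : ℕ) : ℝ) ∧
      ((3 * q k / 4 - q k / 4 + 1 : ℕ) : ℝ) ≤ ((q k : ℝ) + 3) / 2) ∧
    ∃ k0 : ℕ, ∀ k : ℕ, k0 ≤ k → ∀ x : ℝ, ∀ n : ℤ,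
      ¬ RegularPt lam f T x E (LE - δ) (q k) n →
      ∀ a : ℤ, n - ((3 * q k / 4 : ℕ) : ℤ) ≤ a → a ≤ n - ((q k / 4 : ℕ) : ℤ) →
        |Pdet lam f T ((T ^ a) x) E (q k)| ≤ Real.exp ((q k : ℝ) * (LE - δ / 10)) := by
  constructor
  · intro k
    have h1 : q k + 1 ≤ 2 * (3 * q k / 4 - q k / 4 + 1) := by omega
    have h2 : 2 * (3 * q k / 4 - q k / 4 + 1) ≤ q k + 3 := by omega
    have h1' : ((q k + 1 : ℕ) : ℝ) ≤ ((2 * (3 * q k / 4 - q k / 4 + 1) : ℕ) : ℝ) := by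
      exact_mod_cast h1
    have h2' : ((2 * (3 * q k / 4 - q k / 4 + 1) : ℕ) : ℝ) ≤ ((q k + 3 : ℕ) : ℝ) := by
      exact_mod_cast h2
    rw [Nat.cast_mul] at h1' h2'
    push_cast at h1' h2' ⊢
    constructor <;> linarith
  obtain ⟨n0, hn0⟩ := uniform_upper f T ν γm γp Cm Cp lam α E LE hγm hγp hfper hf0 hfLip hTmono
    hTper hαirr hrot hCm hCp hνprob hνinv hνper hcomp hLya (hδ0.trans hδL) (δ / 20) (by linarith)
  obtain ⟨k0, hk0⟩ := q_tendsto α q hαirr hqcf (20 + 4 * n0 + 8)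
  refine ⟨k0, fun k hk x n hsing a ha1 ha2 => ?_⟩
  have hq := hk0 k hk
  by_contra hbig
  rw [not_le] at hbig
  apply hsing
  obtain ⟨m, hm⟩ : ∃ m, q k = m + 1 := ⟨q k - 1, by omega⟩
  rw [hm] at hq ha1 ha2 hbig ⊢
  obtain ⟨i, hi⟩ := Int.eq_ofNat_of_zero_le (show 0 ≤ n - a by omega)
  have hi1 : (m + 1) / 4 ≤ i := by omega
  have hi2 : i ≤ 3 * (m + 1) / 4 := by omega
  have him : i < m + 1 := by omega
  set u := useq lam f T E ((T ^ a) x) with hu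
  rw [abs_Pdet, ← hu] at hbig
  have hD : 0 < |cont u (m + 1)| := (Real.exp_pos _).trans hbig
  have hD0 : cont u (m + 1) ≠ 0 := abs_pos.mp hD
  have hshift : (fun j => u (j + (i + 1))) = useq lam f T E ((T ^ (i + 1)) ((T ^ a) x)) := by
    ext j
    simp [hu, useq, pow_add]
  have hright : |cont (fun j => u (j + (i + 1))) (m - i)|
      ≤ Real.exp ((m - i : ℕ) * (LE + δ / 20)) := by
    rw [hshift]
    exact (abs_cont_le _ _ _ _ _ _).trans (hn0 _ (by omega) _)
  have hleft : |cont u i| ≤ Real.exp (i * (LE + δ / 20)) :=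
    (abs_cont_le _ _ _ _ _ _).trans (hn0 _ (by omega) _)
  -- Both Green function entries are quotients with denominator `cont u (m + 1)`.
  have hquot : ∀ G N s t : ℝ, cont u (m + 1) * G = N → |N| ≤ Real.exp s →
      s - ((m + 1 : ℕ) : ℝ) * (LE - δ / 10) ≤ t → |G| ≤ Real.exp t := by
    intro G N s t hGN hN hst
    have h1 : |cont u (m + 1)| * |G| ≤ Real.exp s := by rwa [← abs_mul, hGN]
    have h2 : Real.exp s ≤ Real.exp (((m + 1 : ℕ) : ℝ) * (LE - δ / 10)) * Real.exp t := by
      rw [← Real.exp_add]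
      exact Real.exp_le_exp.mpr (by linarith)
    have h3 : Real.exp s ≤ |cont u (m + 1)| * Real.exp t :=
      h2.trans (mul_le_mul_of_nonneg_right hbig.le (Real.exp_pos t).le)
    exact le_of_mul_le_mul_left (h1.trans h3) hD
  have r1 : (m : ℝ) ≤ 4 * i + 2 := by exact_mod_cast (show m ≤ 4 * i + 2 by omega)
  have r2 : (4 : ℝ) * i ≤ 3 * (m + 1) := by exact_mod_cast (show 4 * i ≤ 3 * (m + 1) by omega)
  have r3 : (27 : ℝ) ≤ m := by exact_mod_cast (show 27 ≤ m by omega)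
  have r4 : ((m - i : ℕ) : ℝ) = m - i := Nat.cast_sub (by omega)
  have r5 : (0 : ℝ) ≤ i := Nat.cast_nonneg i
  refine ⟨a, 0, ⟨i, him⟩, Fin.last m, rfl, by simp, by simp; omega, ?_, ?_, ?_, ?_⟩
  · have : m + 1 ≤ 5 * i := by omega
    have : (m : ℝ) + 1 ≤ 5 * i := by exact_mod_cast this
    push_cast
    linarith
  · simp only [Fin.val_last]
    push_cast
    linarith
  · rw [GBox_eq lam f T x E a (m + 1) _ _ hD0, ← hu]
    refine hquot _ _ _ _ (jac_inv_left u m hD0 ⟨i, him⟩) hright ?_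
    rw [r4]
    push_cast
    nlinarith
  · rw [GBox_eq lam f T x E a (m + 1) _ _ hD0, ← hu]
    refine hquot _ _ _ _ (jac_inv_right u m hD0 ⟨i, him⟩) hleft ?_
    simp only [Fin.val_last]
    push_cast
    nlinarith
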